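/- arXiv:1502.02472 — 2 statements merged into one kernel-verified Lean document; each statement's English description precedes it below -/
import Mathlib

section
/- Let c, k, m, n be positive integers with c + 1 ≤ k ≤ m and n ≤ m^{c-1+1/k} / (4 k^{c+1}). In the random bipartite graph in which each of n left vertices independently receives a uniformly random c-element subset of an m-element right vertex set as its neighborhood, with probability at least 1/4 the resulting graph simultaneously satisfies: (a) every right vertex has degree in [nc/m − √((n/2)·ln(4m)), nc/m + √((n/2)·ln(4m))]; and (b) every subset S of left vertices with 1 ≤ |S| ≤ k satisfies |Γ(S)| ≥ |S|. (Note that for |S| ≤ c condition (b) holds automatically since each left vertex has c distinct neighbors, so the only possible violations are for c+1 ≤ |S| ≤ k.) -/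
attribute [local instance] Classical.propDecidable

/-!
Hoeffding's inequality bounds the probability that a fixed right vertex has the wrong degree by
`2 exp (-log (4m)) = 1 / (2m)`, so (a) fails with probability at most `1/2`.

If (b) fails, then for some `c ≤ t < k` the neighbourhoods of some `t + 1` left vertices all lie in
a common set of `t` right vertices. For fixed sets this has probability at most
`(t / m) ^ (c (t + 1))`, and the hypothesis on `n` is what makes the union bound over both sets at
most `4 ^ -(t + 1)`. Summing over `t ≥ c`, (b) fails with probability at most `1 / (3 * 4 ^ c)`.
-/

open Finset MeasureTheory ProbabilityTheory

theorem descFactorial_mul_pow_le {t m : ℕ} (h : t ≤ m) (c : ℕ) :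
    t.descFactorial c * m ^ c ≤ m.descFactorial c * t ^ c := by
  induction c with
  | zero => simp
  | succ c ih =>
    have hfactor : (t - c) * m ≤ (m - c) * t := by
      rw [Nat.sub_mul, Nat.sub_mul, mul_comm m t]
      gcongr
    calc t.descFactorial (c + 1) * m ^ (c + 1)
        = (t - c) * m * (t.descFactorial c * m ^ c) := by rw [Nat.descFactorial_succ]; ring
      _ ≤ (m - c) * t * (m.descFactorial c * t ^ c) := Nat.mul_le_mul hfactor ih
      _ = m.descFactorial (c + 1) * t ^ (c + 1) := by rw [Nat.descFactorial_succ]; ring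

theorem choose_mul_pow_le {t m : ℕ} (h : t ≤ m) (c : ℕ) :
    t.choose c * m ^ c ≤ m.choose c * t ^ c := by
  refine Nat.le_of_mul_le_mul_left ?_ c.factorial_pos
  simpa only [Nat.descFactorial_eq_factorial_mul_choose, mul_assoc]
    using descFactorial_mul_pow_le h c

theorem choose_div_choose_le_pow {t m c : ℕ} (htm : t ≤ m) (hcm : c ≤ m) :
    (t.choose c : ℝ) / m.choose c ≤ ((t : ℝ) / m) ^ c := by
  rcases m.eq_zero_or_pos with rfl | hm
  · simp_all
  · have hchoose : 0 < m.choose c := Nat.choose_pos hcm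
    rw [div_pow, div_le_div_iff₀ (by positivity) (by positivity), mul_comm (_ ^ c)]
    exact_mod_cast choose_mul_pow_le htm c

theorem choose_mul_choose_mul_pow_le {n m k c t : ℕ} (hm : 0 < m) (htk : t < k)
    (hn : (n : ℝ) ≤ (m : ℝ) ^ ((c : ℝ) - 1 + 1 / (k : ℝ)) / (4 * (k : ℝ) ^ c)) :
    (n.choose (t + 1) : ℝ) * (m.choose t * ((t : ℝ) / m) ^ (c * (t + 1))) ≤
      (1 / 4) ^ (t + 1) := by
  have hm' : (0 : ℝ) < m := by exact_mod_cast hm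
  have hk : (0 : ℝ) < k := by exact_mod_cast t.zero_le.trans_lt htk
  set x : ℝ := (m : ℝ) ^ (1 / (k : ℝ))
  have hx : x ^ (t + 1) ≤ m :=
    calc x ^ (t + 1) ≤ x ^ k :=
          pow_le_pow_right₀ (Real.one_le_rpow (by exact_mod_cast hm) (by positivity)) htk
      _ = m := by simpa only [x, one_div] using Real.rpow_inv_natCast_pow hm'.le (by lia)
  have hvertex : (n : ℝ) * (t / m) ^ c ≤ x / (4 * m) :=
    calc (n : ℝ) * (t / m) ^ c ≤ n * (k / m) ^ c := by gcongr
      _ ≤ m ^ ((c : ℝ) - 1 + 1 / (k : ℝ)) / (4 * k ^ c) * (k / m) ^ c := by gcongr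
      _ = m ^ c / m * x / (4 * k ^ c) * (k / m) ^ c := by
          rw [Real.rpow_add hm', Real.rpow_sub_one hm'.ne', Real.rpow_natCast]
      _ = x / (4 * m) := by rw [div_pow]; field_simp
  calc (n.choose (t + 1) : ℝ) * (m.choose t * ((t : ℝ) / m) ^ (c * (t + 1)))
      ≤ n ^ (t + 1) * (m ^ t * ((t : ℝ) / m) ^ (c * (t + 1))) := by
        gcongr
        · exact_mod_cast n.choose_le_pow (t + 1)
        · exact_mod_cast m.choose_le_pow t
    _ = (n * (t / m) ^ c) ^ (t + 1) * m ^ t := by rw [mul_pow, ← pow_mul]; ring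
    _ ≤ (x / (4 * m)) ^ (t + 1) * m ^ t := by gcongr
    _ = x ^ (t + 1) / m * (1 / 4) ^ (t + 1) := by
        rw [div_pow, mul_pow, pow_succ (m : ℝ), one_div_pow]
        field_simp
    _ ≤ (1 / 4) ^ (t + 1) := mul_le_of_le_one_left (by positivity) ((div_le_one hm').2 hx)

section ProductMeasure

variable {ι α Ω : Type*} [MeasurableSpace α] [MeasurableSpace Ω]

theorem measureReal_uniformOn_univ [Fintype α] [MeasurableSingletonClass α] (p : α → Prop)
    [DecidablePred p] :
    (uniformOn Set.univ).real {x | p x} = (#{x | p x} : ℝ) / Fintype.card α := by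
  have h := uniformOn_apply_finset (s := (univ : Finset α)) (t := {x | p x})
  rw [coe_univ, univ_inter, coe_filter_univ] at h
  simp [measureReal_def, h]

theorem uniformOn_univ_pi [Fintype ι] [Finite α] [MeasurableSingletonClass α] :
    uniformOn (Set.univ : Set (ι → α)) = Measure.pi fun _ ↦ uniformOn Set.univ := by
  rw [← uniformOn_pi, Set.pi_univ]

theorem measureReal_pi_forall_mem [Fintype ι] (μ : Measure α) [IsProbabilityMeasure μ]
    (S : Finset ι) (A : Set α) :
    (Measure.pi fun _ ↦ μ).real {f : ι → α | ∀ i ∈ S, f i ∈ A} = μ.real A ^ #S := by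
  have hpi : {f : ι → α | ∀ i ∈ S, f i ∈ A} =
      Set.univ.pi fun i ↦ if i ∈ S then A else Set.univ := by
    ext f
    simp [Set.mem_ite_univ_right]
  rw [hpi, measureReal_def, Measure.pi_pi]
  simp [apply_ite μ, measureReal_def]

theorem measureReal_lt_abs_sum_sub_integral_le {μ : Measure Ω} [IsProbabilityMeasure μ]
    {X : ι → Ω → ℝ} (hindep : iIndepFun X μ) (hX : ∀ i, AEMeasurable (X i) μ) {a b : ℝ}
    (hab : ∀ i, ∀ᵐ ω ∂μ, X i ω ∈ Set.Icc a b) (s : Finset ι) {ε : ℝ} (hε : 0 ≤ ε) :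
    μ.real {ω | ε < |∑ i ∈ s, (X i ω - μ[X i])|} ≤
      2 * Real.exp (-(2 * ε ^ 2 / (#s * (b - a) ^ 2))) := by
  set Y : ι → Ω → ℝ := fun i ω ↦ X i ω - μ[X i]
  have hsubG (i : ι) : HasSubgaussianMGF (Y i) ((‖b - a‖₊ / 2) ^ 2) μ :=
    hasSubgaussianMGF_of_mem_Icc (hX i) (hab i)
  have hYindep : iIndepFun Y μ :=
    hindep.comp (fun i x ↦ x - ∫ ω, X i ω ∂μ) fun _ ↦ measurable_id.sub_const _
  have hupper := HasSubgaussianMGF.measure_sum_ge_le_of_iIndepFun hYindep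
    (s := s) (fun i _ ↦ hsubG i) hε
  have hlower := HasSubgaussianMGF.measure_sum_ge_le_of_iIndepFun
    (hYindep.comp (fun _ ↦ Neg.neg) fun _ ↦ measurable_neg) (s := s) (fun i _ ↦ (hsubG i).neg) hε
  have hexponent : -ε ^ 2 / (2 * ∑ _i ∈ s, ((‖b - a‖₊ / 2) ^ 2 : NNReal)) =
      -(2 * ε ^ 2 / (#s * (b - a) ^ 2)) := by
    generalize b - a = d
    simp only [sum_const, nsmul_eq_mul, NNReal.coe_mul, NNReal.coe_natCast, NNReal.coe_pow,
      NNReal.coe_div, NNReal.coe_ofNat, coe_nnnorm, Real.norm_eq_abs, div_pow, sq_abs]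
    ring
  rw [hexponent] at hupper hlower
  have hcover : {ω | ε < |∑ i ∈ s, Y i ω|} ⊆
      {ω | ε ≤ ∑ i ∈ s, Y i ω} ∪ {ω | ε ≤ ∑ i ∈ s, (Neg.neg ∘ Y i) ω} := by
    intro ω hω
    have : ∑ i ∈ s, (Neg.neg ∘ Y i) ω = -∑ i ∈ s, Y i ω := sum_neg_distrib ..
    exact (lt_abs.1 hω).imp le_of_lt fun h ↦ (this ▸ h).le
  calc μ.real {ω | ε < |∑ i ∈ s, Y i ω|}
      ≤ _ := measureReal_mono hcover
    _ ≤ _ := measureReal_union_le _ _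
    _ ≤ _ := add_le_add hupper hlower
    _ = _ := (two_mul _).symm

end ProductMeasure

section UniformMeasure

local instance {R : Type*} : MeasurableSpace (Finset R) := ⊤

local instance {R : Type*} : MeasurableSingletonClass (Finset R) := ⟨fun _ ↦ trivial⟩

section UniformSubset

variable {R : Type*} [Fintype R] {c : ℕ}

theorem nonempty_subtype_card_eq (hc : c ≤ Fintype.card R) :
    Nonempty {C : Finset R // #C = c} :=
  let ⟨C, _, hC⟩ := exists_subset_card_eq (s := (univ : Finset R)) hc
  ⟨C, hC⟩

theorem measureReal_uniformOn_card_eq (p : Finset R → Prop) [DecidablePred p] :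
    (uniformOn Set.univ).real {C : {C : Finset R // #C = c} | p C} =
      (#{C ∈ powersetCard c univ | p C} : ℝ) / (Fintype.card R).choose c := by
  have hcount : #{C : {C : Finset R // #C = c} | p C} = #{C ∈ powersetCard c univ | p C} := by
    rw [← card_map (Function.Embedding.subtype _)]
    congr 1
    ext C
    simp [and_comm]
  rw [measureReal_uniformOn_univ (fun C : {C : Finset R // #C = c} ↦ p C), hcount,
    Fintype.card_finset_len]

theorem measureReal_uniformOn_subset_le (hc : c ≤ Fintype.card R) (T : Finset R) :
    (uniformOn Set.univ).real {C : {C : Finset R // #C = c} | (C : Finset R) ⊆ T} ≤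
      ((#T : ℝ) / Fintype.card R) ^ c := by
  have hcount : {C ∈ powersetCard c (univ : Finset R) | C ⊆ T} = powersetCard c T := by
    ext C
    simp [mem_powersetCard, and_comm]
  rw [measureReal_uniformOn_card_eq (· ⊆ T), hcount, card_powersetCard]
  exact choose_div_choose_le_pow (card_le_univ T) hc

theorem measureReal_uniformOn_mem (hc : c ≤ Fintype.card R) (v : R) :
    (uniformOn Set.univ).real {C : {C : Finset R // #C = c} | v ∈ (C : Finset R)} =
      (c : ℝ) / Fintype.card R := by
  rw [measureReal_uniformOn_card_eq (v ∈ ·)]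
  rcases c with - | c
  · simp
  · have hcount := card_filter_powersetCard_subset {v} univ (c + 1) (subset_univ _) (by simp)
    simp only [singleton_subset_iff, card_univ, card_singleton, Nat.add_sub_cancel] at hcount
    obtain ⟨m, hm⟩ := Nat.exists_eq_add_one_of_ne_zero (Fintype.card_pos_iff.2 ⟨v⟩).ne'
    have hchoose : 0 < (m + 1).choose (c + 1) := Nat.choose_pos (hm ▸ hc)
    rw [hcount, hm, Nat.add_sub_cancel, div_eq_div_iff (by positivity) (by positivity)]
    norm_cast
    rw [mul_comm, Nat.add_one_mul_choose_eq, mul_comm]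

end UniformSubset

/-- The bipartite graphs with left vertex set `L` and right vertex set `R` in which every left
vertex has exactly `c` neighbours, encoded by the neighbourhoods of the left vertices. The random
graph model is the uniform measure on this type. -/
abbrev LeftRegularGraph (L R : Type*) (c : ℕ) := L → {C : Finset R // #C = c}

namespace LeftRegularGraph

variable {L R : Type*} {c : ℕ}

/-- The neighbourhood `Γ(S)` of a set `S` of left vertices. -/
noncomputable def neighbors (G : LeftRegularGraph L R c) (S : Finset L) : Finset R :=
  S.biUnion fun u ↦ G u

/-- Hall's condition for sets of at most `k` left vertices, which says that the graph is a
combinatorial batch code. -/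
def IsBatchCode (G : LeftRegularGraph L R c) (k : ℕ) : Prop :=
  ∀ S : Finset L, 1 ≤ #S → #S ≤ k → #S ≤ #(G.neighbors S)

section Degree

variable [Fintype L]

/-- The degree of a right vertex. -/
noncomputable def degree (G : LeftRegularGraph L R c) (v : R) : ℕ :=
  #{u | v ∈ (G u : Finset R)}

/-- Every right vertex has degree within `ε` of the average degree `|L| c / |R|`. -/
def IsNearlyRegular [Fintype R] (G : LeftRegularGraph L R c) (ε : ℝ) : Prop :=
  ∀ v, (G.degree v : ℝ) ∈ Set.Icc ((Fintype.card L : ℝ) * c / Fintype.card R - ε)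
    ((Fintype.card L : ℝ) * c / Fintype.card R + ε)

end Degree

theorem exists_neighbors_le_of_not_isBatchCode {G : LeftRegularGraph L R c} {k : ℕ}
    (hG : ¬ G.IsBatchCode k) :
    ∃ t ∈ Ico c k, ∃ S, #S = t + 1 ∧ #(G.neighbors S) ≤ t := by
  simp only [IsBatchCode, not_forall, not_le] at hG
  obtain ⟨S, hpos, hSk, hviolated⟩ := hG
  obtain ⟨u, hu⟩ := card_pos.1 hpos
  have hdegree : c ≤ #(G.neighbors S) :=
    (G u).2.symm.trans_le (card_le_card (subset_biUnion_of_mem (fun u ↦ (G u : Finset R)) hu))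
  exact ⟨#S - 1, by rw [mem_Ico]; lia, S, by lia, by lia⟩

theorem measureReal_neighbors_subset_le [Finite L] [Fintype R] (hc : c ≤ Fintype.card R)
    (S : Finset L) (T : Finset R) :
    (uniformOn Set.univ).real {G : LeftRegularGraph L R c | G.neighbors S ⊆ T} ≤
      ((#T : ℝ) / Fintype.card R) ^ (c * #S) := by
  have := Fintype.ofFinite L
  have := nonempty_subtype_card_eq hc
  simp only [neighbors, biUnion_subset]
  rw [uniformOn_univ_pi, pow_mul]
  calc _ = (uniformOn Set.univ).real {C : {C : Finset R // #C = c} | (C : Finset R) ⊆ T} ^ #S :=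
        measureReal_pi_forall_mem _ S _
    _ ≤ _ := by gcongr; exact measureReal_uniformOn_subset_le hc T

section Random

variable [Fintype L] [Fintype R]

theorem measureReal_lt_abs_degree_sub_le (hc : c ≤ Fintype.card R) (v : R) {ε : ℝ} (hε : 0 ≤ ε) :
    (uniformOn Set.univ).real {G : LeftRegularGraph L R c |
      ε < |(G.degree v : ℝ) - (Fintype.card L : ℝ) * c / Fintype.card R|} ≤
      2 * Real.exp (-(2 * ε ^ 2 / Fintype.card L)) := by
  have := nonempty_subtype_card_eq hc
  let A : Set {C : Finset R // #C = c} := {C | v ∈ (C : Finset R)}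
  let X : {C : Finset R // #C = c} → ℝ := A.indicator 1
  have hX : Measurable X := .of_discrete
  have hmean (u : L) : ∫ G : LeftRegularGraph L R c, X (G u) ∂uniformOn Set.univ =
      (c : ℝ) / Fintype.card R := by
    rw [uniformOn_univ_pi, integral_comp_eval (X := fun _ : L ↦ {C : Finset R // #C = c})
        (μ := fun _ ↦ uniformOn Set.univ) (i := u) hX.aestronglyMeasurable,
      integral_indicator_one .of_discrete, measureReal_uniformOn_mem hc]
  have hdegree (G : LeftRegularGraph L R c) :
      (G.degree v : ℝ) - (Fintype.card L : ℝ) * c / Fintype.card R =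
        ∑ u, (X (G u) - (c : ℝ) / Fintype.card R) := by
    simp [X, A, degree, Set.indicator_apply, mul_div_assoc]
  have hindep : iIndepFun (fun (u : L) (G : LeftRegularGraph L R c) ↦ X (G u))
      (uniformOn Set.univ) := by
    rw [uniformOn_univ_pi]
    exact iIndepFun_pi fun _ ↦ hX.aemeasurable
  have hoeffding := measureReal_lt_abs_sum_sub_integral_le hindep
    (fun u ↦ (hX.comp (measurable_pi_apply u)).aemeasurable)
    (fun u ↦ .of_forall fun G ↦ ⟨Set.indicator_nonneg (by simp) _,
      Set.indicator_le_self' (by simp) _⟩) univ hε (a := 0) (b := 1)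
  simpa only [hmean, hdegree, sub_zero, one_pow, mul_one, card_univ] using hoeffding

theorem measureReal_not_isNearlyRegular_le (hc : c ≤ Fintype.card R) {ε : ℝ} (hε : 0 ≤ ε) :
    (uniformOn Set.univ).real {G : LeftRegularGraph L R c | ¬ G.IsNearlyRegular ε} ≤
      Fintype.card R * (2 * Real.exp (-(2 * ε ^ 2 / Fintype.card L))) := by
  have hcover : {G : LeftRegularGraph L R c | ¬ G.IsNearlyRegular ε} = ⋃ v, {G |
      ε < |(G.degree v : ℝ) - (Fintype.card L : ℝ) * c / Fintype.card R|} := by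
    ext G
    simp only [IsNearlyRegular, ← Set.mem_Icc_iff_abs_le, abs_sub_comm _ (degree _ _ : ℝ),
      not_forall, not_le, Set.mem_iUnion, Set.mem_ofPred_eq]
  have := nonempty_subtype_card_eq hc
  calc _ ≤ ∑ v : R, (uniformOn Set.univ).real {G : LeftRegularGraph L R c |
          ε < |(G.degree v : ℝ) - (Fintype.card L : ℝ) * c / Fintype.card R|} :=
        hcover ▸ measureReal_iUnion_fintype_le _
    _ ≤ ∑ _v : R, 2 * Real.exp (-(2 * ε ^ 2 / Fintype.card L)) :=
        sum_le_sum fun v _ ↦ measureReal_lt_abs_degree_sub_le hc v hε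
    _ = _ := by simp

theorem measureReal_not_isNearlyRegular_sqrt_le_half [Nonempty L] (hc : c ≤ Fintype.card R) :
    (uniformOn Set.univ).real {G : LeftRegularGraph L R c | ¬ G.IsNearlyRegular
      √((Fintype.card L : ℝ) / 2 * Real.log (4 * Fintype.card R))} ≤ 1 / 2 := by
  refine (measureReal_not_isNearlyRegular_le hc (Real.sqrt_nonneg _)).trans ?_
  rcases (Fintype.card R).eq_zero_or_pos with hm | hm
  · simp [hm]
  have : (0 : ℝ) < Fintype.card L := by exact_mod_cast Fintype.card_pos
  have hlog : 0 ≤ Real.log (4 * Fintype.card R) :=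
    Real.log_nonneg (by exact_mod_cast (by lia : 1 ≤ 4 * Fintype.card R))
  rw [Real.sq_sqrt (by positivity), show 2 * ((Fintype.card L : ℝ) / 2 *
      Real.log (4 * Fintype.card R)) / Fintype.card L = Real.log (4 * Fintype.card R) by field_simp,
    Real.exp_neg, Real.exp_log (by positivity)]
  apply le_of_eq
  field_simp
  norm_num

theorem measureReal_exists_card_neighbors_le_le (hc : c ≤ Fintype.card R) (s : ℕ) {t : ℕ}
    (ht : t ≤ Fintype.card R) :
    (uniformOn Set.univ).real {G : LeftRegularGraph L R c | ∃ S, #S = s ∧ #(G.neighbors S) ≤ t} ≤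
      (Fintype.card L).choose s *
        ((Fintype.card R).choose t * ((t : ℝ) / Fintype.card R) ^ (c * s)) := by
  have := nonempty_subtype_card_eq hc
  have hcover : {G : LeftRegularGraph L R c | ∃ S, #S = s ∧ #(G.neighbors S) ≤ t} ⊆
      ⋃ S ∈ powersetCard s (univ : Finset L), ⋃ T ∈ powersetCard t (univ : Finset R),
        {G | G.neighbors S ⊆ T} := by
    rintro G ⟨S, hS, hSt⟩
    obtain ⟨T, hT, hTt⟩ := exists_superset_card_eq hSt ht
    simp only [Set.mem_iUnion]
    exact ⟨S, by simpa using hS, T, by simpa using hTt, hT⟩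
  calc _ ≤ _ := measureReal_mono hcover (measure_ne_top _ _)
    _ ≤ ∑ S ∈ powersetCard s (univ : Finset L), ∑ T ∈ powersetCard t (univ : Finset R),
          (uniformOn Set.univ).real {G : LeftRegularGraph L R c | G.neighbors S ⊆ T} :=
        (measureReal_biUnion_finset_le _ _).trans
          (sum_le_sum fun S _ ↦ measureReal_biUnion_finset_le _ _)
    _ ≤ ∑ _S ∈ powersetCard s (univ : Finset L), ∑ _T ∈ powersetCard t (univ : Finset R),
          ((t : ℝ) / Fintype.card R) ^ (c * s) := by
        gcongr with _ hS _ hT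
        rw [← (mem_powersetCard.1 hS).2, ← (mem_powersetCard.1 hT).2]
        exact measureReal_neighbors_subset_le hc _ _
    _ = _ := by simp

theorem measureReal_not_isBatchCode_le {k : ℕ} (hc : c ≤ Fintype.card R)
    (hk : k ≤ Fintype.card R)
    (hL : (Fintype.card L : ℝ) ≤
      (Fintype.card R : ℝ) ^ ((c : ℝ) - 1 + 1 / (k : ℝ)) / (4 * (k : ℝ) ^ c)) :
    (uniformOn Set.univ).real {G : LeftRegularGraph L R c | ¬ G.IsBatchCode k} ≤
      1 / (3 * 4 ^ c) := by
  have := nonempty_subtype_card_eq hc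
  have hcover : {G : LeftRegularGraph L R c | ¬ G.IsBatchCode k} ⊆
      ⋃ t ∈ Ico c k, {G | ∃ S, #S = t + 1 ∧ #(G.neighbors S) ≤ t} := by
    intro G hG
    simpa only [Set.mem_iUnion, exists_prop] using! exists_neighbors_le_of_not_isBatchCode hG
  calc _ ≤ _ := measureReal_mono hcover (measure_ne_top _ _)
    _ ≤ ∑ t ∈ Ico c k, (uniformOn Set.univ).real {G : LeftRegularGraph L R c |
          ∃ S, #S = t + 1 ∧ #(G.neighbors S) ≤ t} := measureReal_biUnion_finset_le _ _
    _ ≤ ∑ t ∈ Ico c k, (1 / 4 : ℝ) ^ (t + 1) := by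
        gcongr with t ht
        have htk := (mem_Ico.1 ht).2
        exact (measureReal_exists_card_neighbors_le_le hc (t + 1) (htk.le.trans hk)).trans
          (choose_mul_choose_mul_pow_le (by lia) htk hL)
    _ = (1 / 4) * ∑ t ∈ Ico c k, (1 / 4 : ℝ) ^ t := by simp only [pow_succ', mul_sum]
    _ ≤ (1 / 4) * ((1 / 4) ^ c / (1 - 1 / 4)) := by
        gcongr
        exact geom_sum_Ico_le_of_lt_one (by norm_num) (by norm_num)
    _ = 1 / (3 * 4 ^ c) := by rw [one_div_pow]; field_simp; norm_num

end Random

end LeftRegularGraph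

theorem stmt_8_general {L R : Type*} [Fintype L] [Fintype R] [Nonempty L] {c k : ℕ}
    (hc : c ≤ Fintype.card R) (hk : k ≤ Fintype.card R)
    (hL : (Fintype.card L : ℝ) ≤
      (Fintype.card R : ℝ) ^ ((c : ℝ) - 1 + 1 / (k : ℝ)) / (4 * (k : ℝ) ^ c)) :
    1 / 2 - 1 / (3 * 4 ^ c) ≤
      (#{G : LeftRegularGraph L R c | G.IsNearlyRegular
          √((Fintype.card L : ℝ) / 2 * Real.log (4 * Fintype.card R)) ∧ G.IsBatchCode k} : ℝ) /
        Fintype.card (LeftRegularGraph L R c) := by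
  have := nonempty_subtype_card_eq hc
  set ε := √((Fintype.card L : ℝ) / 2 * Real.log (4 * Fintype.card R))
  have hregular := LeftRegularGraph.measureReal_not_isNearlyRegular_sqrt_le_half (L := L) hc
  have hbatch := LeftRegularGraph.measureReal_not_isBatchCode_le hc hk hL
  rw [← measureReal_uniformOn_univ]
  set μ : Measure (LeftRegularGraph L R c) := uniformOn Set.univ
  have hcover : (Set.univ : Set (LeftRegularGraph L R c)) ⊆
      {G | G.IsNearlyRegular ε ∧ G.IsBatchCode k} ∪
        ({G | ¬ G.IsNearlyRegular ε} ∪ {G | ¬ G.IsBatchCode k}) := by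
    intro G _
    simp only [Set.mem_union, Set.mem_ofPred_eq]
    tauto
  have hunion : 1 ≤ μ.real {G | G.IsNearlyRegular ε ∧ G.IsBatchCode k} +
      (μ.real {G | ¬ G.IsNearlyRegular ε} + μ.real {G | ¬ G.IsBatchCode k}) :=
    calc 1 = μ.real Set.univ := probReal_univ.symm
      _ ≤ _ := measureReal_mono hcover
      _ ≤ _ := measureReal_union_le _ _
      _ ≤ _ := by gcongr; exact measureReal_union_le _ _
  linarith

end UniformMeasure

/-- **The random construction succeeds with probability at least 1/4.**
With `c + 1 ≤ k ≤ m` and `n ≤ m^(c-1+1/k)/(4k^(c+1))`, in the random bipartite graph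
where each of the `n` left vertices independently receives a uniformly random
`c`-element subset of an `m`-element right vertex set as its neighborhood, with
probability at least `1/4` the graph simultaneously satisfies:
(a) every right vertex has degree in `[nc/m − √((n/2)·ln(4m)), nc/m + √((n/2)·ln(4m))]`;
(b) every subset `S` of left vertices with `1 ≤ |S| ≤ k` satisfies `|Γ(S)| ≥ |S|`. -/
theorem stmt_8 (c k m n : ℕ) (hc : 0 < c) (hn : 0 < n) (hck : c + 1 ≤ k) (hkm : k ≤ m)
    (hnm : (n : ℝ) ≤ (m : ℝ) ^ ((c : ℝ) - 1 + 1 / (k : ℝ)) / (4 * (k : ℝ) ^ (c + 1))) :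
    (1 : ℝ) / 4 ≤
      ((Finset.univ.filter fun ω : Fin n → {C : Finset (Fin m) // C.card = c} =>
          (∀ v : Fin m,
            (n : ℝ) * c / m - Real.sqrt ((n : ℝ) / 2 * Real.log (4 * m)) ≤
              ((Finset.univ.filter fun u : Fin n => v ∈ (ω u : Finset (Fin m))).card : ℝ) ∧
            ((Finset.univ.filter fun u : Fin n => v ∈ (ω u : Finset (Fin m))).card : ℝ) ≤
              (n : ℝ) * c / m + Real.sqrt ((n : ℝ) / 2 * Real.log (4 * m))) ∧
          (∀ S : Finset (Fin n), 1 ≤ S.card → S.card ≤ k →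
            S.card ≤ (S.biUnion fun u => (ω u : Finset (Fin m))).card)).card : ℝ) /
        (Fintype.card (Fin n → {C : Finset (Fin m) // C.card = c}) : ℝ) := by
  have hcard : (n : ℝ) ≤ (m : ℝ) ^ ((c : ℝ) - 1 + 1 / (k : ℝ)) / (4 * (k : ℝ) ^ c) := by
    have hk : (1 : ℝ) ≤ k := by exact_mod_cast c.succ_pos.trans_le hck
    refine hnm.trans ?_
    gcongr
    exact c.le_succ
  have hfour : (4 : ℝ) ≤ 4 ^ c := le_self_pow₀ (by norm_num) hc.ne'
  have : NeZero n := ⟨hn.ne'⟩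
  calc (1 : ℝ) / 4 ≤ 1 / 2 - 1 / (3 * 4) := by norm_num
    _ ≤ 1 / 2 - 1 / (3 * 4 ^ c) := by gcongr
    _ ≤ _ := stmt_8_general (L := Fin n) (R := Fin m) (c := c) (k := k)
      (by simpa using by lia) (by simpa using hkm) (by simpa only [Fintype.card_fin] using hcard)
    _ = _ := by
      simp only [LeftRegularGraph.IsNearlyRegular, LeftRegularGraph.IsBatchCode,
        LeftRegularGraph.degree, LeftRegularGraph.neighbors, Set.mem_Icc, Fintype.card_fin]
      congr!
end

section
/- Let c and k be positive integers with c + 1 ≤ k, and let m be sufficiently large; set n = ⌊m^{c-1+1/k} / (4 k^{c+1})⌋. Consider the random bipartite graph model on L = {u_1, ..., u_n} and R with |R| = m, each Γ(u_j) uniform on c-element subsets of R, independently. Let Y be the number of pairs (S, S') with S ⊆ L, c+1 ≤ |S| ≤ k, S' ⊆ R, |S'| = |S| − 1, Γ(S) ⊆ S', and let Z be the number of right vertices v with |deg(v) − nc/m| > √((n/2)·ln(4m)). If c-element sets C_1, ..., C_n ⊆ R are chosen sequentially so that each C_j minimizes the conditional expectation E[Y + Z | Γ(u_1) = C_1, ...,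 Γ(u_j) = C] over all c-element subsets C of R, then in the resulting deterministic graph Y = 0 and Z = 0; that is, the graph is a c-uniform (n, cn, k, m)-combinatorial batch code in which every right vertex has degree in [nc/m − √((n/2)·ln(4m)), nc/m + √((n/2)·ln(4m))]. -/
attribute [local instance] Classical.propDecidable

/-!
Write `m = |R|`. A `c`-element set falls into a given set of `s - 1` right vertices with probability
`C(s-1, c) / C(m, c) ≤ (k / m)^c`, so a union bound over `S` and `S'` gives at most
`n^s m^(s-1) (k / m)^(cs) ≤ (4k)^(-s)` expected bad pairs with `|S| = s`; for all `s ≤ k` together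
this is at most `k · 1/(4k)`, so `E[Y] ≤ 1/4`. A right degree is a sum of `n`
independent indicators of mean `c / m`, and Hoeffding's inequality with a union bound over `R` gives
`E[Z] ≤ m · 2 / (4m) = 1/2`. The conditional expectation before a
greedy step is the average of those after the possible choices, so it never increases along the
greedy choices: the final value of `Y + Z` is a natural number at most `3/4`, that is, zero.
-/

section

open Finset MeasureTheory ProbabilityTheory
open scoped BigOperators

section UniformProbability

variable {ι A X : Type*} [Fintype ι] [Fintype A]

lemma dens_piFinset [DecidableEq ι] {B : ι → Type*} [∀ i, Fintype (B i)] (s : ∀ i, Finset (B i)) :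
    (Fintype.piFinset s).dens = ∏ i, (s i).dens := by
  simp only [dens_eq_card_div_card, Fintype.card_piFinset, Fintype.card_pi, Nat.cast_prod,
    prod_div_distrib]

lemma dens_forall_mem [DecidableEq ι] [Nonempty A] (S : Finset ι) (P : A → Prop)
    [DecidablePred P] :
    dens {ω : ι → A | ∀ i ∈ S, P (ω i)} = dens {a | P a} ^ #S := by
  have hpi : ({ω : ι → A | ∀ i ∈ S, P (ω i)} : Finset (ι → A)) =
      Fintype.piFinset fun i => if i ∈ S then univ.filter P else univ := by
    ext ω
    refine mem_filter_univ _ |>.trans ?_ |>.trans Fintype.mem_piFinset.symm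
    refine forall_congr' fun i => ?_
    split_ifs with hi <;> simp [hi]
  simp only [hpi, dens_piFinset, apply_ite dens, dens_univ, Fintype.prod_ite_mem, prod_const]

lemma expect_boole (P : A → Prop) [DecidablePred P] :
    𝔼 a, (if P a then 1 else 0 : ℝ) = (dens {a | P a} : ℝ) := by
  rw [Fintype.expect_eq_sum_div_card, sum_boole, nnratCast_dens]

lemma expect_card_filter (s : Finset X) (P : A → X → Prop) [∀ a, DecidablePred (P a)] :
    𝔼 a, (#{x ∈ s | P a x} : ℝ) = ∑ x ∈ s, (dens {a | P a x} : ℝ) := by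
  simp_rw [← sum_boole, expect_sum_comm, expect_boole]

lemma measureReal_uniformOn_univ_s11 [MeasurableSpace A] [MeasurableSingletonClass A] (s : Finset A) :
    (uniformOn Set.univ).real (s : Set A) = s.dens := by
  simp [measureReal_def, uniformOn_univ, Measure.count_apply_finset, nnratCast_dens]

lemma integral_uniformOn_univ [MeasurableSpace A] [MeasurableSingletonClass A] (f : A → ℝ) :
    ∫ a, f a ∂uniformOn Set.univ = 𝔼 a, f a := by
  have hsingle (a : A) : (uniformOn Set.univ).real {a} = (Fintype.card A : ℝ)⁻¹ := by
    simpa [nnratCast_dens] using measureReal_uniformOn_univ_s11 {a}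
  simp only [integral_fintype .of_finite, hsingle, smul_eq_mul, ← mul_sum,
    Fintype.expect_eq_sum_div_card, div_eq_inv_mul]

lemma dens_le_sum_sub_expect_le [DecidableEq ι] [Nonempty A] {f : ι → A → ℝ} {a b : ι → ℝ}
    (hf : ∀ i x, f i x ∈ Set.Icc (a i) (b i)) {t : ℝ} (ht : 0 ≤ t) :
    (dens {ω : ι → A | t ≤ ∑ i, (f i (ω i) - 𝔼 x, f i x)} : ℝ) ≤
      Real.exp (-(2 * t ^ 2 / ∑ i, (b i - a i) ^ 2)) := by
  let _ : MeasurableSpace A := ⊤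
  let μ : Measure A := uniformOn Set.univ
  let ν : Measure (ι → A) := Measure.pi fun _ => μ
  have hν : ν = uniformOn Set.univ := by rw [← Set.pi_univ Set.univ, uniformOn_pi]
  have hindep : iIndepFun (fun i (ω : ι → A) => f i (ω i) - 𝔼 x, f i x) ν :=
    iIndepFun_pi (X := fun i x => f i x - 𝔼 y, f i y) fun _ => measurable_from_top.aemeasurable
  have hsubG (i : ι) :
      HasSubgaussianMGF (fun ω : ι → A => f i (ω i) - 𝔼 x, f i x) ((‖b i - a i‖₊ / 2) ^ 2) ν := by
    have h := hasSubgaussianMGF_of_mem_Icc (μ := μ) (X := f i)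
      measurable_from_top.aemeasurable (.of_forall (hf i))
    rw [integral_uniformOn_univ] at h
    rw [← (measurePreserving_eval (fun _ => μ) i).map_eq] at h
    exact .of_map (X := fun x => f i x - 𝔼 y, f i y) (measurable_pi_apply i).aemeasurable h
  have htail := HasSubgaussianMGF.measure_sum_ge_le_of_iIndepFun hindep
    (s := univ) (fun i _ => hsubG i) ht
  have hset : {ω : ι → A | t ≤ ∑ i, (f i (ω i) - 𝔼 x, f i x)} =
      (univ.filter fun ω : ι → A => t ≤ ∑ i, (f i (ω i) - 𝔼 x, f i x) : Finset _) := by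
    simp
  rw [hset, hν, measureReal_uniformOn_univ_s11] at htail
  refine htail.trans_eq (congrArg Real.exp ?_)
  push_cast
  simp only [Real.norm_eq_abs, div_pow, sq_abs, ← sum_div]
  ring

lemma dens_le_abs_sum_sub_expect_le [DecidableEq ι] [Nonempty A] {f : ι → A → ℝ} {a b : ι → ℝ}
    (hf : ∀ i x, f i x ∈ Set.Icc (a i) (b i)) {t : ℝ} (ht : 0 ≤ t) :
    (dens {ω : ι → A | t ≤ |∑ i, (f i (ω i) - 𝔼 x, f i x)|} : ℝ) ≤
      2 * Real.exp (-(2 * t ^ 2 / ∑ i, (b i - a i) ^ 2)) := by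
  have hupper := dens_le_sum_sub_expect_le hf ht
  have hlower := dens_le_sum_sub_expect_le (f := fun i x => -f i x) (a := fun i => -b i)
    (b := fun i => -a i) (fun i x => ⟨neg_le_neg (hf i x).2, neg_le_neg (hf i x).1⟩) ht
  simp only [expect_neg_distrib, ← neg_sub', sum_neg_distrib, neg_sq,
    sub_sq_comm (a _) (b _)] at hlower
  have hunion := dens_union_le {ω : ι → A | t ≤ ∑ i, (f i (ω i) - 𝔼 x, f i x)}
    ({ω : ι → A | t ≤ -∑ i, (f i (ω i) - 𝔼 x, f i x)} : Finset _)
  simp only [← filter_or, ← le_abs] at hunion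
  refine (NNRat.cast_le.2 hunion).trans ?_
  rw [NNRat.cast_add, two_mul]
  exact add_le_add hupper hlower

end UniformProbability

section ConditionalExpectations

variable {n : ℕ} {A 𝕜 : Type*} [Fintype A] [DecidableEq A] [Field 𝕜]

/-- The assignments that agree with `ω` on the coordinates `0, …, j - 1`. -/
def prefixCylinder (j : ℕ) (ω : Fin n → A) : Finset (Fin n → A) :=
  {ω' | ∀ i : Fin n, (i : ℕ) < j → ω' i = ω i}

/-- The conditional expectation of `g`, under a uniformly random assignment, given that the first
`j` coordinates are those of `ω`. -/
def prefixAverage (g : (Fin n → A) → 𝕜) (j : ℕ) (ω : Fin n → A) : 𝕜 :=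
  (∑ ω' ∈ prefixCylinder j ω, g ω') / #(prefixCylinder j ω)

lemma prefixAverage_zero [CharZero 𝕜] (g : (Fin n → A) → 𝕜) (ω : Fin n → A) :
    prefixAverage g 0 ω = 𝔼 ω', g ω' := by
  simp [prefixAverage, prefixCylinder, Fintype.expect_eq_sum_div_card]

lemma prefixAverage_self (g : (Fin n → A) → 𝕜) (ω : Fin n → A) :
    prefixAverage g n ω = g ω := by
  have hcyl : prefixCylinder n ω = {ω} := by
    ext ω'
    simp [prefixCylinder, funext_iff]
  simp [prefixAverage, hcyl]

lemma card_prefixCylinder_pos (j : ℕ) (ω : Fin n → A) : 0 < #(prefixCylinder j ω) :=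
  card_pos.2 ⟨ω, by simp [prefixCylinder]⟩

lemma filter_prefixCylinder_eq (j : Fin n) (ω : Fin n → A) (x : A) :
    {ω' ∈ prefixCylinder j ω | ω' j = x} = prefixCylinder (j + 1) (Function.update ω j x) := by
  ext ω'
  simp only [prefixCylinder, mem_filter, mem_univ, true_and, Nat.lt_succ_iff_lt_or_eq]
  constructor
  · rintro ⟨hlt, rfl⟩ i (hi | hi)
    · rw [hlt i hi, Function.update_of_ne (Fin.ne_of_lt hi)]
    · simp [Fin.ext hi]
  · intro h
    refine ⟨fun i hi => ?_, by simpa using h j (.inr rfl)⟩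
    rw [h i (.inl hi), Function.update_of_ne (Fin.ne_of_lt hi)]

variable [LinearOrder 𝕜] [IsStrictOrderedRing 𝕜]

lemma le_prefixAverage_of_forall_le {g : (Fin n → A) → 𝕜} {j : Fin n} {ω : Fin n → A} {y : 𝕜}
    (h : ∀ x, y ≤ prefixAverage g (j + 1) (Function.update ω j x)) : y ≤ prefixAverage g j ω := by
  have hpos (j : ℕ) (ω : Fin n → A) : (0 : 𝕜) < #(prefixCylinder j ω) :=
    mod_cast card_prefixCylinder_pos j ω
  rw [prefixAverage, le_div_iff₀ (hpos _ _),
    card_eq_sum_card_fiberwise (f := fun ω' : Fin n → A => ω' j) (t := univ) fun _ _ => mem_univ _,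
    ← sum_fiberwise _ fun ω' : Fin n → A => ω' j, Nat.cast_sum, mul_sum]
  refine sum_le_sum fun x _ => ?_
  rw [filter_prefixCylinder_eq, ← le_div_iff₀ (hpos _ _)]
  exact h x

lemma le_expect_of_forall_prefixAverage_le {g : (Fin n → A) → 𝕜} {ω : Fin n → A}
    (h : ∀ (j : Fin n) x,
      prefixAverage g (j + 1) ω ≤ prefixAverage g (j + 1) (Function.update ω j x)) :
    g ω ≤ 𝔼 ω', g ω' := by
  have hle (j : ℕ) (hj : j ≤ n) : prefixAverage g j ω ≤ prefixAverage g 0 ω := by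
    induction j with
    | zero => rfl
    | succ j ih => exact (le_prefixAverage_of_forall_le (h ⟨j, hj⟩)).trans (ih (by lia))
  simpa only [prefixAverage_self, prefixAverage_zero] using hle n le_rfl

end ConditionalExpectations

section RandomNeighborhood

/-- The possible neighbourhoods of a left vertex of a `c`-uniform bipartite graph with right
vertices `R`; such a graph with left vertices `L` is a function `L → Neighborhood R c`. -/
abbrev Neighborhood (R : Type*) (c : ℕ) := {C : Finset R // #C = c}

variable {R : Type*} [Fintype R] {c : ℕ}

lemma nonempty_neighborhood (hc : c ≤ Fintype.card R) : Nonempty (Neighborhood R c) := by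
  rw [← Fintype.card_pos_iff, Fintype.card_finset_len]
  exact Nat.choose_pos hc

variable [DecidableEq R]

lemma dens_neighborhood_subset (T : Finset R) :
    dens {C : Neighborhood R c | (C : Finset R) ⊆ T} =
      ((#T).choose c : ℚ≥0) / (Fintype.card R).choose c := by
  have hmap : ({C : Neighborhood R c | (C : Finset R) ⊆ T} : Finset _).map (.subtype _) =
      powersetCard c T := by
    ext C
    simp [mem_powersetCard, and_comm]
  rw [dens_eq_card_div_card, Fintype.card_finset_len, ← card_powersetCard, ← hmap, card_map]

lemma choose_mul_pow_le_choose_mul_pow {a m : ℕ} (c : ℕ) (h : a ≤ m) :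
    a.choose c * m ^ c ≤ m.choose c * a ^ c := by
  have hdesc : a.descFactorial c * m ^ c ≤ m.descFactorial c * a ^ c := by
    simp only [Nat.descFactorial_eq_prod_range, pow_eq_prod_const, ← prod_mul_distrib]
    refine prod_le_prod' fun i _ => ?_
    rw [Nat.sub_mul, Nat.sub_mul, mul_comm a m]
    gcongr
  rw [Nat.descFactorial_eq_factorial_mul_choose, Nat.descFactorial_eq_factorial_mul_choose,
    mul_assoc, mul_assoc] at hdesc
  exact Nat.le_of_mul_le_mul_left hdesc c.factorial_pos

lemma dens_neighborhood_subset_le (T : Finset R) :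
    dens {C : Neighborhood R c | (C : Finset R) ⊆ T} ≤ ((#T : ℚ≥0) / Fintype.card R) ^ c := by
  rw [dens_neighborhood_subset, div_pow]
  rcases lt_or_ge (Fintype.card R) c with hc | hc
  · simp [Nat.choose_eq_zero_of_lt hc]
  have hC : (0 : ℚ≥0) < (Fintype.card R).choose c := mod_cast Nat.choose_pos hc
  have hR : (0 : ℚ≥0) < Fintype.card R ^ c := mod_cast Nat.pow_pos_iff.2 (by lia)
  rw [div_le_div_iff₀ hC hR]
  exact_mod_cast (choose_mul_pow_le_choose_mul_pow c (card_le_univ T)).trans_eq (mul_comm _ _)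

lemma dens_mem_neighborhood (hc : c ≤ Fintype.card R) (v : R) :
    dens {C : Neighborhood R c | v ∈ (C : Finset R)} = (c : ℚ≥0) / Fintype.card R := by
  have hR : 0 < Fintype.card R := Fintype.card_pos_iff.2 ⟨v⟩
  have hchoose : 0 < (Fintype.card R).choose c := Nat.choose_pos hc
  have hnotMem : ({C | v ∉ (C : Finset R)} : Finset (Neighborhood R c)) =
      univ.filter fun C : Neighborhood R c => (C : Finset R) ⊆ univ.erase v := by
    ext C
    simp [subset_erase]
  have hcompl :
      dens {C : Neighborhood R c | v ∉ (C : Finset R)} + (c : ℚ≥0) / Fintype.card R = 1 := by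
    rw [hnotMem, dens_neighborhood_subset, card_erase_of_mem (mem_univ v), card_univ,
      div_add_div _ _ (by positivity) (by positivity), div_eq_one_iff_eq (by positivity)]
    norm_cast
    have hpascal := Nat.choose_mul_succ_eq (Fintype.card R - 1) c
    rw [Nat.sub_add_cancel hR] at hpascal
    rw [hpascal, ← mul_add, Nat.sub_add_cancel hc]
  have := nonempty_neighborhood hc
  have htotal := dens_filter_add_dens_filter_not_eq_dens (s := univ)
    fun C : Neighborhood R c => v ∈ (C : Finset R)
  rw [dens_univ, ← hcompl, add_comm] at htotal
  exact add_left_cancel htotal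

end RandomNeighborhood

section Graph

variable {L R : Type*} [DecidableEq R] {c k : ℕ}

/-- The `k`-th Hall condition `|Γ(S)| ≥ |S|` for `1 ≤ |S| ≤ k`, which makes the bipartite graph with
left neighbourhoods `Γ` a combinatorial batch code. -/
def IsBatchCode (k : ℕ) (Γ : L → Finset R) : Prop :=
  ∀ S : Finset L, 1 ≤ #S → #S ≤ k → #S ≤ #(S.biUnion Γ)

variable [Fintype L] [Fintype R]

/-- The pairs `(S, S')` counted by `Y`: each confines the neighbourhood of `S` to a set `S'` with
one element too few, hence witnesses a violation of Hall's condition. -/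
def badPairs (c k : ℕ) (Γ : L → Finset R) : Finset (Finset L × Finset R) :=
  {p | c + 1 ≤ #p.1 ∧ #p.1 ≤ k ∧ #p.2 = #p.1 - 1 ∧ p.1.biUnion Γ ⊆ p.2}

/-- The bad pairs `(S, S')` with `|S| = s`. -/
def badPairsOfCard (s : ℕ) (Γ : L → Finset R) : Finset (Finset L × Finset R) :=
  {p ∈ powersetCard s univ ×ˢ powersetCard (s - 1) univ | p.1.biUnion Γ ⊆ p.2}

lemma card_badPairs (c k : ℕ) (Γ : L → Finset R) :
    #(badPairs c k Γ) = ∑ s ∈ Icc (c + 1) k, #(badPairsOfCard s Γ) := by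
  rw [card_eq_sum_card_fiberwise (f := fun p => #p.1) (t := Icc (c + 1) k)
    fun _ hp => by simp_all [badPairs]]
  refine sum_congr rfl fun s hs => congrArg card ?_
  rw [mem_Icc] at hs
  ext p
  simp only [badPairs, badPairsOfCard, mem_filter, mem_univ, true_and, mem_product,
    mem_powersetCard_univ]
  grind

lemma isBatchCode_of_badPairs_eq_empty {Γ : L → Finset R} (hΓ : ∀ u, c ≤ #(Γ u))
    (hk : k ≤ Fintype.card R + 1) (hbad : badPairs c k Γ = ∅) : IsBatchCode k Γ := by
  intro S hS hSk
  rcases le_or_gt #S c with hSc | hSc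
  · obtain ⟨u, hu⟩ := card_pos.1 hS
    exact hSc.trans <| (hΓ u).trans <| card_le_card <| subset_biUnion_of_mem Γ hu
  · by_contra! hlt
    obtain ⟨S', hSS', -, hS'⟩ := exists_subsuperset_card_eq (subset_univ (S.biUnion Γ))
      (Nat.le_sub_one_of_lt hlt) (by rw [card_univ]; lia)
    have hmem : (S, S') ∈ badPairs c k Γ := by
      rw [badPairs, mem_filter_univ]
      exact ⟨hSc, hSk, hS', hSS'⟩
    simp [hbad] at hmem

/-- The degree of a right vertex. -/
def rightDegree (Γ : L → Finset R) (v : R) : ℕ := #{u | v ∈ Γ u}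

/-- The right vertices whose degree differs from `d` by more than `t`, counted by `Z`. -/
noncomputable def irregularVertices (d t : ℝ) (Γ : L → Finset R) : Finset R :=
  {v | t < |(rightDegree Γ v : ℝ) - d|}

lemma rightDegree_mem_Icc_of_irregularVertices_eq_empty {Γ : L → Finset R} {d t : ℝ}
    (h : irregularVertices d t Γ = ∅) (v : R) :
    (rightDegree Γ v : ℝ) ∈ Set.Icc (d - t) (d + t) := by
  have hv : |(rightDegree Γ v : ℝ) - d| ≤ t := by
    simpa using filter_eq_empty_iff.1 h (mem_univ v)
  rwa [← Set.mem_Icc_iff_abs_le, abs_sub_comm]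

end Graph

section Expectations

variable {L R : Type*} [Fintype L] [DecidableEq L] [Fintype R] [DecidableEq R] {c k : ℕ}

lemma dens_biUnion_subset_le (hc : c ≤ Fintype.card R) (S : Finset L) (T : Finset R) :
    dens {ω : L → Neighborhood R c | S.biUnion (fun u => (ω u : Finset R)) ⊆ T} ≤
      (((#T : ℚ≥0) / Fintype.card R) ^ c) ^ #S := by
  have := nonempty_neighborhood hc
  simp only [biUnion_subset, dens_forall_mem S fun C : Neighborhood R c => (C : Finset R) ⊆ T]
  gcongr
  exact dens_neighborhood_subset_le T

lemma expect_card_badPairsOfCard_le (hc : c ≤ Fintype.card R) (s : ℕ) :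
    𝔼 ω : L → Neighborhood R c, (#(badPairsOfCard s fun u => (ω u : Finset R)) : ℝ) ≤
      (Fintype.card L : ℝ) ^ s * (Fintype.card R : ℝ) ^ (s - 1) *
        ((((s - 1 : ℕ) : ℝ) / Fintype.card R) ^ c) ^ s := by
  simp only [badPairsOfCard, expect_card_filter]
  calc
    _ ≤ ∑ _p ∈ powersetCard s (univ : Finset L) ×ˢ powersetCard (s - 1) (univ : Finset R),
        ((((s - 1 : ℕ) : ℝ) / Fintype.card R) ^ c) ^ s := by
      refine sum_le_sum fun p hp => ?_
      obtain ⟨hS, hT⟩ : #p.1 = s ∧ #p.2 = s - 1 := by simpa using hp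
      rw [← hT, ← hS]
      exact_mod_cast dens_biUnion_subset_le hc p.1 p.2
    _ ≤ _ := by
      rw [sum_const, nsmul_eq_mul, card_product, card_powersetCard, card_powersetCard, card_univ,
        card_univ, Nat.cast_mul]
      gcongr <;> exact_mod_cast Nat.choose_le_pow _ _

lemma pow_mul_pow_mul_div_pow_le {x m : ℝ} {s : ℕ} (hm : 1 ≤ m) (hx₀ : 0 ≤ x)
    (hx : x ≤ m ^ ((c : ℝ) - 1 + 1 / k) / (4 * (k : ℝ) ^ (c + 1))) (hs : 1 ≤ s) (hsk : s ≤ k) :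
    x ^ s * m ^ (s - 1) * (((k : ℝ) / m) ^ c) ^ s ≤ (1 / (4 * (k : ℝ))) ^ s := by
  have hm₀ : 0 < m := by positivity
  have hk : (0 : ℝ) < k := by exact_mod_cast hs.trans hsk
  have hbase : x * ((k : ℝ) / m) ^ c ≤ m ^ (1 / (k : ℝ) - 1) * (1 / (4 * k)) :=
    calc
      x * ((k : ℝ) / m) ^ c
          ≤ m ^ ((c : ℝ) - 1 + 1 / k) / (4 * (k : ℝ) ^ (c + 1)) * ((k : ℝ) / m) ^ c := by gcongr
      _ = m ^ ((c : ℝ) + (1 / k - 1)) / m ^ c * (1 / (4 * k)) := by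
        rw [show (c : ℝ) - 1 + 1 / k = c + (1 / k - 1) by ring, div_pow]
        field_simp
        ring
      _ = _ := by
        rw [Real.rpow_add hm₀, Real.rpow_natCast, mul_div_cancel_left₀ _ (by positivity)]
  have hexponent : (m ^ (1 / (k : ℝ) - 1)) ^ s * m ^ (s - 1) ≤ 1 := by
    rw [← Real.rpow_mul_natCast hm₀.le, ← Real.rpow_natCast, ← Real.rpow_add hm₀,
      Nat.cast_pred hs]
    refine Real.rpow_le_one_of_one_le_of_nonpos hm ?_
    have : (s : ℝ) / k ≤ 1 := (div_le_one hk).2 (mod_cast hsk)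
    linear_combination this
  calc
    _ = (x * ((k : ℝ) / m) ^ c) ^ s * m ^ (s - 1) := by ring
    _ ≤ (m ^ (1 / (k : ℝ) - 1) * (1 / (4 * k))) ^ s * m ^ (s - 1) := by gcongr
    _ = (m ^ (1 / (k : ℝ) - 1)) ^ s * m ^ (s - 1) * (1 / (4 * k)) ^ s := by ring
    _ ≤ _ := mul_le_of_le_one_left (by positivity) hexponent

lemma expect_card_badPairs_le (hc : c ≤ Fintype.card R) (hk : 0 < k) (hkR : k ≤ Fintype.card R)
    (hL : (Fintype.card L : ℝ) ≤
      (Fintype.card R : ℝ) ^ ((c : ℝ) - 1 + 1 / k) / (4 * (k : ℝ) ^ (c + 1))) :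
    𝔼 ω : L → Neighborhood R c, (#(badPairs c k fun u => (ω u : Finset R)) : ℝ) ≤ 1 / 4 := by
  have hk₁ : (1 : ℝ) ≤ k := mod_cast hk
  have hR : (1 : ℝ) ≤ Fintype.card R := mod_cast hk.trans_le hkR
  have hterm : ∀ s ∈ Icc (c + 1) k,
      𝔼 ω : L → Neighborhood R c, (#(badPairsOfCard s fun u => (ω u : Finset R)) : ℝ) ≤
        1 / (4 * (k : ℝ)) := by
    intro s hs
    obtain ⟨hcs, hsk⟩ := mem_Icc.1 hs
    calc
      _ ≤ (Fintype.card L : ℝ) ^ s * (Fintype.card R : ℝ) ^ (s - 1) *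
          ((((s - 1 : ℕ) : ℝ) / Fintype.card R) ^ c) ^ s := expect_card_badPairsOfCard_le hc s
      _ ≤ (Fintype.card L : ℝ) ^ s * (Fintype.card R : ℝ) ^ (s - 1) *
          (((k : ℝ) / Fintype.card R) ^ c) ^ s := by gcongr; lia
      _ ≤ (1 / (4 * (k : ℝ))) ^ s :=
        pow_mul_pow_mul_div_pow_le hR (Nat.cast_nonneg _) hL (by lia) hsk
      _ ≤ _ := pow_le_of_le_one (by positivity) ((div_le_one (by positivity)).2 (by linarith))
        (by lia)
  simp only [card_badPairs, Nat.cast_sum, expect_sum_comm]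
  calc
    _ ≤ #(Icc (c + 1) k) • (1 / (4 * (k : ℝ))) := sum_le_card_nsmul _ _ _ hterm
    _ ≤ k * (1 / (4 * (k : ℝ))) := by
      rw [nsmul_eq_mul, Nat.card_Icc]
      gcongr
      lia
    _ = 1 / 4 := by field_simp

lemma dens_lt_abs_rightDegree_sub_le (hc : c ≤ Fintype.card R) (v : R) {t : ℝ} (ht : 0 ≤ t) :
    (dens {ω : L → Neighborhood R c |
      t < |(rightDegree (fun u => (ω u : Finset R)) v : ℝ) -
        Fintype.card L * c / Fintype.card R|} : ℝ) ≤
      2 * Real.exp (-(2 * t ^ 2 / Fintype.card L)) := by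
  have := nonempty_neighborhood hc
  let f (_ : L) (C : Neighborhood R c) : ℝ := if v ∈ (C : Finset R) then 1 else 0
  have hmean (u : L) : 𝔼 C, f u C = (c : ℝ) / Fintype.card R := by
    simp only [f, expect_boole, dens_mem_neighborhood hc, NNRat.cast_div, NNRat.cast_natCast]
  have htail := dens_le_abs_sum_sub_expect_le (f := f) (a := 0) (b := 1)
    (fun u C => by simp only [f]; split_ifs <;> simp) ht
  simp only [hmean] at htail
  have hsum (ω : L → Neighborhood R c) : ∑ u, (f u (ω u) - (c : ℝ) / Fintype.card R) =
      (rightDegree (fun u => (ω u : Finset R)) v : ℝ) - Fintype.card L * c / Fintype.card R := by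
    simp only [f, sum_sub_distrib, sum_boole, sum_const, nsmul_eq_mul, card_univ, rightDegree,
      mul_div_assoc]
  simp only [hsum, Pi.one_apply, Pi.zero_apply, sub_zero, one_pow, sum_const, card_univ,
    nsmul_one] at htail
  refine (NNRat.cast_le.2 <| dens_le_dens ?_).trans htail
  exact monotone_filter_right _ fun _ _ hlt => hlt.le

lemma expect_card_irregularVertices_le (hc : c ≤ Fintype.card R) {t : ℝ} (ht : 0 ≤ t) :
    𝔼 ω : L → Neighborhood R c, (#(irregularVertices (Fintype.card L * c / Fintype.card R) t
      fun u => (ω u : Finset R)) : ℝ) ≤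
      Fintype.card R * (2 * Real.exp (-(2 * t ^ 2 / Fintype.card L))) := by
  simp only [irregularVertices, expect_card_filter]
  calc
    _ ≤ ∑ _v : R, 2 * Real.exp (-(2 * t ^ 2 / Fintype.card L)) :=
      sum_le_sum fun v _ => dens_lt_abs_rightDegree_sub_le hc v ht
    _ = _ := by rw [sum_const, nsmul_eq_mul, card_univ]

/-- The deviation at which Hoeffding's bound for the upper tail of a sum of `n` indicators equals
`1 / (4 * m)`. -/
noncomputable def degreeTolerance (n m : ℕ) : ℝ := √((n : ℝ) / 2 * Real.log (4 * m))

lemma expect_card_irregularVertices_degreeTolerance_le (hc : c ≤ Fintype.card R) :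
    𝔼 ω : L → Neighborhood R c, (#(irregularVertices (Fintype.card L * c / Fintype.card R)
      (degreeTolerance (Fintype.card L) (Fintype.card R)) fun u => (ω u : Finset R)) : ℝ) ≤
      1 / 2 := by
  rcases isEmpty_or_nonempty L with hL | hL
  · simp [irregularVertices, rightDegree, degreeTolerance]
  rcases isEmpty_or_nonempty R with hR | hR
  · simp [irregularVertices]
  have hm : (1 : ℝ) ≤ Fintype.card R := mod_cast Fintype.card_pos
  have : (0 : ℝ) < Fintype.card L := mod_cast Fintype.card_pos
  have hexponent : 2 * degreeTolerance (Fintype.card L) (Fintype.card R) ^ 2 / Fintype.card L =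
      Real.log (4 * Fintype.card R) := by
    have hlog : 0 ≤ Real.log (4 * Fintype.card R) := Real.log_nonneg (by linarith)
    rw [degreeTolerance, Real.sq_sqrt (by positivity)]
    field_simp
  refine (expect_card_irregularVertices_le hc (Real.sqrt_nonneg _)).trans_eq ?_
  rw [← degreeTolerance, hexponent, Real.exp_neg, Real.exp_log (by positivity)]
  field_simp
  norm_num

end Expectations

theorem stmt_11_general {R : Type*} [Fintype R] [DecidableEq R] {c k m n : ℕ} (hk : 0 < k)
    (hm : Fintype.card R = m) (hcm : c ≤ m) (hkm : k ≤ m)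
    (hn : (n : ℝ) ≤ (m : ℝ) ^ ((c : ℝ) - 1 + 1 / k) / (4 * (k : ℝ) ^ (c + 1)))
    {Y Z : (Fin n → Neighborhood R c) → ℕ}
    (hY : ∀ ω, Y ω = #(badPairs c k fun u => (ω u : Finset R)))
    (hZ : ∀ ω, Z ω =
      #(irregularVertices (n * c / m) (degreeTolerance n m) fun u => (ω u : Finset R)))
    {Cs : Fin n → Neighborhood R c}
    (hCs : ∀ (j : Fin n) D, prefixAverage (fun ω => ((Y ω + Z ω : ℕ) : ℝ)) (j + 1) Cs ≤
      prefixAverage (fun ω => ((Y ω + Z ω : ℕ) : ℝ)) (j + 1) (Function.update Cs j D)) :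
    Y Cs = 0 ∧ Z Cs = 0 ∧ IsBatchCode k (fun u => (Cs u : Finset R)) ∧
      ∀ v, (rightDegree (fun u => (Cs u : Finset R)) v : ℝ) ∈
        Set.Icc (n * c / m - degreeTolerance n m) (n * c / m + degreeTolerance n m) := by
  subst hm
  have hexpectY : 𝔼 ω, (Y ω : ℝ) ≤ 1 / 4 := by
    simpa only [hY] using expect_card_badPairs_le (L := Fin n) hcm hk hkm (by simpa using hn)
  have hexpectZ : 𝔼 ω, (Z ω : ℝ) ≤ 1 / 2 := by
    simpa only [hZ, Fintype.card_fin] using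
      expect_card_irregularVertices_degreeTolerance_le (L := Fin n) hcm
  have hgreedy : ((Y Cs + Z Cs : ℕ) : ℝ) ≤ 𝔼 ω, ((Y ω + Z ω : ℕ) : ℝ) :=
    le_expect_of_forall_prefixAverage_le hCs
  simp only [Nat.cast_add, expect_add_distrib] at hgreedy
  obtain ⟨hY₀, hZ₀⟩ : Y Cs = 0 ∧ Z Cs = 0 := by
    have : Y Cs + Z Cs < 1 := by
      rify
      linarith
    lia
  rw [hY, card_eq_zero] at hY₀
  rw [hZ, card_eq_zero] at hZ₀
  exact ⟨by simp [hY, hY₀], by simp [hZ, hZ₀],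
    isBatchCode_of_badPairs_eq_empty (fun u => (Cs u).2.ge) (by lia) hY₀,
    rightDegree_mem_Icc_of_irregularVertices_eq_empty hZ₀⟩

end

/-- **Correctness of the derandomized construction (Algorithm 1).**
For positive constants `c, k` with `c + 1 ≤ k` and all sufficiently large `m`, set
`n = ⌊m^(c-1+1/k)/(4k^(c+1))⌋`. In the random model where each of the `n` left vertices
independently receives a uniformly random `c`-element subset of `Fin m` as its
neighborhood, let `Y ω` count the bad pairs `(S, S')` (with `c+1 ≤ |S| ≤ k`,
`|S'| = |S| − 1`, `Γ(S) ⊆ S'`) and let `Z ω` count the right vertices whose degree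
deviates from `nc/m` by more than `√((n/2)·ln(4m))`. If the neighborhoods
`Cs 1, …, Cs n` are chosen sequentially so that each `Cs j` minimizes the conditional
expectation `ce (j+1)` of `Y + Z` given the prefix, then in the resulting
deterministic graph `Y = 0` and `Z = 0`: the graph is a `c`-uniform `(n, cn, k, m)`-CBC
(every Hall condition `|Γ(S)| ≥ |S|` for `1 ≤ |S| ≤ k` holds) in which every right
vertex has degree in `[nc/m − √((n/2)·ln(4m)), nc/m + √((n/2)·ln(4m))]`. -/
theorem stmt_11 (c k : ℕ) (hc : 0 < c) (hck : c + 1 ≤ k) :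
    ∃ M : ℕ, ∀ m : ℕ, M ≤ m →
      ∀ n : ℕ, n = ⌊(m : ℝ) ^ ((c : ℝ) - 1 + 1 / (k : ℝ)) / (4 * (k : ℝ) ^ (c + 1))⌋₊ →
        ∀ Y Z : (Fin n → {C : Finset (Fin m) // C.card = c}) → ℕ,
          (∀ ω, Y ω = (Finset.univ.filter fun p : Finset (Fin n) × Finset (Fin m) =>
              c + 1 ≤ p.1.card ∧ p.1.card ≤ k ∧ p.2.card = p.1.card - 1 ∧
                p.1.biUnion (fun u => (ω u : Finset (Fin m))) ⊆ p.2).card) →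
          (∀ ω, Z ω = (Finset.univ.filter fun v : Fin m =>
              Real.sqrt ((n : ℝ) / 2 * Real.log (4 * m)) <
                |((Finset.univ.filter fun u : Fin n => v ∈ (ω u : Finset (Fin m))).card : ℝ) -
                  (n : ℝ) * c / m|).card) →
          ∀ ce : ℕ → (Fin n → {C : Finset (Fin m) // C.card = c}) → ℝ,
            (∀ (j : ℕ) (ω : Fin n → {C : Finset (Fin m) // C.card = c}),
              ce j ω =
                (∑ ω' ∈ Finset.univ.filter
                    (fun ω' : Fin n → {C : Finset (Fin m) // C.card = c} =>
                      ∀ i : Fin n, (i : ℕ) < j → ω' i = ω i),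
                  ((Y ω' + Z ω' : ℕ) : ℝ)) /
                ((Finset.univ.filter
                    (fun ω' : Fin n → {C : Finset (Fin m) // C.card = c} =>
                      ∀ i : Fin n, (i : ℕ) < j → ω' i = ω i)).card : ℝ)) →
            ∀ Cs : Fin n → {C : Finset (Fin m) // C.card = c},
              (∀ j : Fin n, ∀ D : {C : Finset (Fin m) // C.card = c},
                ce ((j : ℕ) + 1) Cs ≤ ce ((j : ℕ) + 1) (Function.update Cs j D)) →
              Y Cs = 0 ∧ Z Cs = 0 ∧
              (∀ S : Finset (Fin n), 1 ≤ S.card → S.card ≤ k →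
                S.card ≤ (S.biUnion fun u => (Cs u : Finset (Fin m))).card) ∧
              (∀ v : Fin m,
                (n : ℝ) * c / m - Real.sqrt ((n : ℝ) / 2 * Real.log (4 * m)) ≤
                  ((Finset.univ.filter fun u : Fin n => v ∈ (Cs u : Finset (Fin m))).card : ℝ) ∧
                ((Finset.univ.filter fun u : Fin n => v ∈ (Cs u : Finset (Fin m))).card : ℝ) ≤
                  (n : ℝ) * c / m + Real.sqrt ((n : ℝ) / 2 * Real.log (4 * m))) := by
  refine ⟨k, fun m hm n hn Y Z hY hZ ce hce Cs hCs => ?_⟩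
  have hbound : (n : ℝ) ≤ (m : ℝ) ^ ((c : ℝ) - 1 + 1 / (k : ℝ)) / (4 * (k : ℝ) ^ (c + 1)) :=
    hn ▸ Nat.floor_le (by positivity)
  simp only [hce] at hCs
  exact stmt_11_general (by lia) (Fintype.card_fin m) (by lia) hm hbound hY hZ hCs
end
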